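/- Let N ≥ 1 and 0 ≤ n ≤ N. Let V(ℂ) ⊆ ℂ^N be the common zero locus of a set of polynomials with real coefficients, and assume V(ℂ) is irreducible for the Zariski topology (V(ℂ) is nonempty, and whenever V(ℂ) is contained in the union of two Zariski-closed sets, it is contained in one of them). Set V(ℝ) = V(ℂ) ∩ ℝ^N. Suppose x₀ ∈ V(ℝ) is a smooth point of V(ℂ) in the following sense: there exist a Euclidean-open neighborhood W of x₀ in ℂ^N and a polynomial map F: ℂ^N → ℂ^{N−n} with real coefficients such that V(ℂ) ∩ W = F⁻¹(0) ∩ W and the Jacobian matrix of F at x₀ has rank N−n. Let H be a subset of V(ℝ), open in the Euclidean (Hausdorff) topology of V(ℝ) inherited from ℝ^N, with x₀ ∈ H. Then H is Zariski-dense in V(ℂ): every polynomial P ∈ ℂ[x₁,…,x_N] vanishing at every point of H vanishes at every point of V(ℂ). -/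

import Mathlib

open MvPolynomial

/-!
Near `x₀` the variety is the zero set of a submersion `F` commuting with complex conjugation, so
the inverse function theorem provides a holomorphic retraction `ρ` onto it which also commutes with
conjugation. If `P` vanishes at the real points of `V` near `x₀`, then `P ∘ ρ` is holomorphic near
`x₀` and vanishes at the real points of the ambient space, hence identically; therefore `P` vanishes
on a Euclidean neighbourhood of `x₀` in `V`.

To pass from this neighbourhood to `V`, let `A` be the coordinate ring, a domain, and take a Noether
normalisation `B = ℂ[y₁, …, y_d] ⊆ A`. The resulting finite map from `V` to `ℂ^d` is open for the
Euclidean topology: if `h ∈ A` separates a point from the other points of its fibre, then the roots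
of the minimal polynomial of `h` over `B` depend continuously on `y`, each of them is the value of
`h` at a point over `y`, and properness forces that point to be close to the given one. If `P` were
nonzero in `A`, it would divide a nonzero `b ∈ B`, and points over `{b ≠ 0}` arbitrarily close to
`x₀` would have `P ≠ 0`.
-/

open Filter Metric Topology

section Extension

variable {K : Type*} [Field K] [IsAlgClosed K]

theorem exists_ringHom_comp_algebraMap_eq_of_isIntegral {R A : Type*} [CommRing R] [CommRing A]
    [Algebra R A] [Algebra.IsIntegral R A] (e : R →+* K)
    (he : RingHom.ker (algebraMap R A) ≤ RingHom.ker e) :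
    ∃ φ : A →+* K, φ.comp (algebraMap R A) = e := by
  have : (RingHom.ker e).IsPrime := RingHom.ker_isPrime e
  obtain ⟨Q, -, hQ, hQe⟩ := Ideal.exists_ideal_over_prime_of_isIntegral (S := A)
    (RingHom.ker e) ⊥ he
  let ebar : R ⧸ RingHom.ker e →+* K := Ideal.Quotient.lift (RingHom.ker e) e fun _ h => h
  have : Q.LiesOver (RingHom.ker e) := ⟨hQe.symm⟩
  algebraize [ebar]
  have : FaithfulSMul (R ⧸ RingHom.ker e) K :=
    (faithfulSMul_iff_algebraMap_injective _ _).2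
      (RingHom.lift_injective_of_ker_le_ideal _ _ le_rfl)
  have : Algebra.IsIntegral (R ⧸ RingHom.ker e) (A ⧸ Q) :=
    Ideal.Quotient.algebra_isIntegral_of_liesOver Q (RingHom.ker e)
  have : Module.IsTorsionFree (R ⧸ RingHom.ker e) (A ⧸ Q) :=
    FaithfulSMul.to_isTorsionFree _ _
  let lift : A ⧸ Q →ₐ[R ⧸ RingHom.ker e] K := IsAlgClosed.lift
  exact ⟨(lift : A ⧸ Q →+* K).comp (Ideal.Quotient.mk Q),
    RingHom.ext fun r => lift.commutes (Ideal.Quotient.mk _ r)⟩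

theorem exists_ringHom_apply_eq_of_isRoot_minpoly {B A : Type*} [CommRing B] [IsDomain B]
    [IsIntegrallyClosed B] [CommRing A] [IsDomain A] [Algebra B A] [Module.IsTorsionFree B A]
    [Algebra.IsIntegral B A] {e : B →+* K} {a : A} {t : K}
    (ht : ((minpoly B a).map e).IsRoot t) :
    ∃ φ : A →+* K, φ.comp (algebraMap B A) = e ∧ φ a = t := by
  -- Extend the homomorphism `B[X] → K`, `X ↦ t`, along the surjection `B[X] → B[a] ⊆ A`.
  algebraize [(Polynomial.aeval a : Polynomial B →ₐ[B] A).toRingHom]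
  have : IsScalarTower B (Polynomial B) A :=
    .of_algebraMap_eq fun b => (Polynomial.aeval_C a b).symm
  have : Algebra.IsIntegral (Polynomial B) A := .tower_top (R := B)
  obtain ⟨φ, hφ⟩ := exists_ringHom_comp_algebraMap_eq_of_isIntegral (A := A)
    (Polynomial.eval₂RingHom e t) fun p hp => by
      obtain ⟨r, rfl⟩ := minpoly.isIntegrallyClosed_dvd (Algebra.IsIntegral.isIntegral a) hp
      rw [RingHom.mem_ker, map_mul, Polynomial.coe_eval₂RingHom, ← Polynomial.eval_map, ht,
        zero_mul]
  have hφ' (p : Polynomial B) : φ (Polynomial.aeval a p) = p.eval₂ e t := RingHom.congr_fun hφ p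
  exact ⟨φ, RingHom.ext fun b => by simpa using hφ' (.C b), by simpa using hφ' .X⟩

end Extension

theorem exists_isRoot_dist_lt_of_norm_eval_lt {K : Type*} [NormedField K] [IsAlgClosed K]
    {q : Polynomial K} (hq : q.Monic) {t₀ : K} {ε : ℝ} (hε : 0 ≤ ε)
    (h : ‖q.eval t₀‖ < ε ^ q.natDegree) : ∃ t, q.IsRoot t ∧ dist t t₀ < ε := by
  by_contra! hfar
  have hsplit : q.Splits := IsAlgClosed.splits q
  refine h.not_ge ?_
  calc ε ^ q.natDegree = (q.roots.map fun _ => ε).prod := by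
        rw [Multiset.map_const', Multiset.prod_replicate, hsplit.natDegree_eq_card_roots]
    _ ≤ (q.roots.map fun t => ‖t₀ - t‖).prod :=
        Multiset.prod_map_le_prod_map₀ _ _ (fun _ _ => hε) fun t ht => by
          rw [← dist_eq_norm, dist_comm]
          exact hfar t (Polynomial.isRoot_of_mem_roots ht)
    _ = ‖q.eval t₀‖ := by
        rw [hsplit.eval_eq_prod_roots_of_monic hq, ← normHom_apply, map_multiset_prod,
          Multiset.map_map]
        rfl

section Specialization

variable {τ K : Type*} [NormedField K] {y₀ : τ → K}

theorem continuous_eval_map_eval (p : Polynomial (MvPolynomial τ K)) :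
    Continuous fun z : (τ → K) × K => (p.map (eval z.1)).eval z.2 := by
  simp only [Polynomial.eval_map, Polynomial.eval₂_eq_sum_range]
  exact continuous_finsetSum _ fun j _ =>
    ((MvPolynomial.continuous_eval _).comp continuous_fst).mul (continuous_snd.pow _)

theorem eventually_exists_isRoot_mem_of_isRoot [IsAlgClosed K]
    {p : Polynomial (MvPolynomial τ K)} (hp : p.Monic) {t₀ : K}
    (ht₀ : (p.map (eval y₀)).IsRoot t₀) {U : Set K} (hU : U ∈ 𝓝 t₀) :
    ∀ᶠ y in 𝓝 y₀, ∃ t ∈ U, (p.map (eval y)).IsRoot t := by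
  obtain ⟨ε, hε, hεU⟩ := Metric.mem_nhds_iff.1 hU
  have hcont : Continuous fun y => ‖(p.map (eval y)).eval t₀‖ :=
    ((continuous_eval_map_eval p).comp (Continuous.prodMk_left t₀)).norm
  have hsmall : ∀ᶠ y in 𝓝 y₀, ‖(p.map (eval y)).eval t₀‖ < ε ^ p.natDegree :=
    hcont.continuousAt.eventually_lt continuousAt_const (by rw [ht₀, norm_zero]; positivity)
  filter_upwards [hsmall] with y hy
  rw [← hp.natDegree_map (eval y)] at hy
  obtain ⟨t, ht, htε⟩ := exists_isRoot_dist_lt_of_norm_eval_lt (hp.map _) hε.le hy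
  exact ⟨t, hεU htε, ht⟩

theorem norm_lt_of_isRoot_of_monic {q : Polynomial K} (hq : q.Monic) {t : K} (ht : q.IsRoot t) :
    ‖t‖ < ∑ j ∈ Finset.range q.natDegree, ‖q.coeff j‖ + 1 := by
  have hbound : q.cauchyBound ≤ ∑ j ∈ Finset.range q.natDegree, ‖q.coeff j‖₊ + 1 := by
    rw [Polynomial.cauchyBound, hq.leadingCoeff, nnnorm_one, div_one]
    gcongr
    exact Finset.sup_le fun j hj =>
      Finset.single_le_sum (f := fun j => ‖q.coeff j‖₊) (fun _ _ => zero_le) hj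
  simpa using NNReal.coe_lt_coe.2 ((ht.norm_lt_cauchyBound hq.ne_zero).trans_le hbound)

theorem exists_eventually_forall_isRoot_norm_lt {p : Polynomial (MvPolynomial τ K)}
    (hp : p.Monic) (y₀ : τ → K) :
    ∃ M : ℝ, ∀ᶠ y in 𝓝 y₀, ∀ t, (p.map (eval y)).IsRoot t → ‖t‖ < M := by
  let bound (y : τ → K) : ℝ := ∑ j ∈ Finset.range p.natDegree, ‖eval y (p.coeff j)‖ + 1
  have hcont : Continuous bound :=
    (continuous_finsetSum _ fun j _ => (MvPolynomial.continuous_eval _).norm).add_const 1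
  obtain ⟨M, hM⟩ := exists_gt (bound y₀)
  refine ⟨M, ?_⟩
  filter_upwards [hcont.continuousAt.eventually_lt continuousAt_const hM] with y hy t ht
  refine (norm_lt_of_isRoot_of_monic (hp.map _) ht).trans ?_
  simpa only [bound, hp.natDegree_map, Polynomial.coeff_map] using hy

-- The roots of monic polynomials stay in a compact set, over which the claim is a tube lemma.
theorem eventually_forall_mem_of_forall_isRoot_mem [ProperSpace K] {σ Y : Type*} [Finite σ]
    [TopologicalSpace Y] [T2Space Y] {χ : σ → Polynomial (MvPolynomial τ K)}
    (hχ : ∀ i, (χ i).Monic) {f : (σ → K) → Y} (hf : Continuous f) {t₀ : Y}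
    {U : Set (σ → K)} (hU : IsOpen U)
    (hU₀ : ∀ x, (∀ i, ((χ i).map (eval y₀)).IsRoot (x i)) → f x = t₀ → x ∈ U) :
    ∀ᶠ z in 𝓝 (y₀, t₀), ∀ x, (∀ i, ((χ i).map (eval z.1)).IsRoot (x i)) → f x = z.2 → x ∈ U := by
  choose M hM using fun i => exists_eventually_forall_isRoot_norm_lt (hχ i) y₀
  have hcompact : IsCompact (Set.univ.pi fun i => closedBall (0 : K) (M i)) :=
    isCompact_univ_pi fun i => isCompact_closedBall _ _
  have hbox : ∀ᶠ z in 𝓝 (y₀, t₀), ∀ x, (∀ i, ((χ i).map (eval z.1)).IsRoot (x i)) →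
      x ∈ Set.univ.pi fun i => closedBall (0 : K) (M i) := by
    filter_upwards [(eventually_all.2 hM).prod_inl_nhds t₀] with z hz x hx i _
    exact mem_closedBall_zero_iff.2 (hz i _ (hx i)).le
  let bad : Set (((τ → K) × Y) × (σ → K)) :=
    {w | (∀ i, ((χ i).map (eval w.1.1)).IsRoot (w.2 i)) ∧ f w.2 = w.1.2 ∧ w.2 ∉ U}
  have hbad : IsClosed bad := by
    have hroots : IsClosed {w : ((τ → K) × Y) × (σ → K) |
        ∀ i, ((χ i).map (eval w.1.1)).IsRoot (w.2 i)} := by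
      rw [Set.ofPred_forall]
      exact isClosed_iInter fun i =>
        isClosed_eq ((continuous_eval_map_eval (χ i)).comp
          (continuous_fst.fst.prodMk ((continuous_apply i).comp continuous_snd))) continuous_const
    exact hroots.and ((isClosed_eq (hf.comp continuous_snd) continuous_fst.snd).and
      (hU.isClosed_compl.preimage continuous_snd))
  have hgood : ∀ᶠ z in 𝓝 (y₀, t₀), ∀ x ∈ Set.univ.pi fun i => closedBall (0 : K) (M i),
      (z, x) ∉ bad :=
    hcompact.eventually_forall_of_forall_eventually fun a _ =>
      hbad.isOpen_compl.mem_nhds fun ⟨ha, hfa, haU⟩ => haU (hU₀ a ha hfa)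
  filter_upwards [hbox, hgood] with z hzbox hzgood x hx hfx
  by_contra hxU
  exact hzgood x (hzbox x hx) ⟨hx, hfx, hxU⟩

end Specialization

theorem exists_eval_ne_zero_and_forall_eval_eq_zero {σ K : Type*} [Field K]
    {R : Set (σ → K)} (hR : R.Finite) (x₀ : σ → K) :
    ∃ f : MvPolynomial σ K, eval x₀ f ≠ 0 ∧ ∀ r ∈ R, r ≠ x₀ → eval r f = 0 := by
  have hsep (r : σ → K) (hr : r ≠ x₀) : ∃ l : MvPolynomial σ K, eval x₀ l ≠ 0 ∧ eval r l = 0 := by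
    obtain ⟨i, hi⟩ := Function.ne_iff.1 hr
    exact ⟨X i - C (r i), by simpa [sub_eq_zero] using hi.symm, by simp⟩
  choose! l hl₀ hl using hsep
  have hR' := hR.subset (Set.sdiff_subset (t := {x₀}))
  refine ⟨∏ r ∈ hR'.toFinset, l r, ?_, fun r hr hne => ?_⟩
  · rw [map_prod, Finset.prod_ne_zero_iff]
    exact fun r hr => hl₀ r ((hR'.mem_toFinset).1 hr).2
  · rw [map_prod]
    exact Finset.prod_eq_zero ((hR'.mem_toFinset).2 ⟨hr, hne⟩) (hl r hne)

theorem frequently_eval_ne_zero {τ K : Type*} [NontriviallyNormedField K] {p : MvPolynomial τ K}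
    (hp : p ≠ 0) (y₀ : τ → K) : ∃ᶠ y in 𝓝 y₀, eval y p ≠ 0 := by
  intro hzero
  rw [nhds_pi] at hzero
  obtain ⟨J, s, hs, hsub⟩ := Filter.mem_pi'.1 hzero
  refine hp (funext_set s (fun i => infinite_of_mem_nhds (y₀ i) (hs i)) fun y hy => ?_)
  simpa using hsub (Set.pi_mono' (fun _ _ => subset_rfl) (Set.subset_univ _) hy)

section ZeroLocus

variable {K : Type*} [NontriviallyNormedField K] [IsAlgClosed K] [ProperSpace K]

theorem eventually_exists_ringHom_comp_eq_eval {σ τ A : Type*} [Finite σ] [CommRing A] [IsDomain A]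
    [Algebra (MvPolynomial τ K) A] [Module.IsTorsionFree (MvPolynomial τ K) A]
    [Algebra.IsIntegral (MvPolynomial τ K) A] {φ₀ : A →+* K} {y₀ : τ → K}
    (hφ₀ : φ₀.comp (algebraMap (MvPolynomial τ K) A) = eval y₀) {a : σ → A} {U : Set (σ → K)}
    (hU : U ∈ 𝓝 (φ₀ ∘ a)) :
    ∀ᶠ y in 𝓝 y₀, ∃ φ : A →+* K,
      φ.comp (algebraMap (MvPolynomial τ K) A) = eval y ∧ φ ∘ a ∈ U := by
  let B := MvPolynomial τ K
  have hmonic (b : A) : (minpoly B b).Monic := minpoly.monic (Algebra.IsIntegral.isIntegral b)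
  have hroot {φ : A →+* K} {y : τ → K} (hφ : φ.comp (algebraMap B A) = eval y) (b : A) :
      ((minpoly B b).map (eval y)).IsRoot (φ b) := by
    rw [Polynomial.IsRoot, ← hφ, Polynomial.eval_map, ← Polynomial.hom_eval₂,
      ← Polynomial.aeval_def, minpoly.aeval, map_zero]
  have hfinite : {x : σ → K | ∀ i, ((minpoly B (a i)).map (eval y₀)).IsRoot (x i)}.Finite :=
    Set.Finite.pi' fun i => Polynomial.finite_setOfPred_isRoot ((hmonic (a i)).map _).ne_zero
  obtain ⟨f, hf₀, hf⟩ := exists_eval_ne_zero_and_forall_eval_eq_zero hfinite (φ₀ ∘ a)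
  let h : A := eval₂ ((algebraMap B A).comp C) a f
  have happly {φ : A →+* K} {y : τ → K} (hφ : φ.comp (algebraMap B A) = eval y) :
      φ h = eval (φ ∘ a) f := by
    have hC : φ.comp ((algebraMap B A).comp C) = .id K := by
      rw [← RingHom.comp_assoc, hφ]
      exact RingHom.ext fun c => eval_C c
    rw [← eval₂_id, ← hC]
    exact eval₂_comp_left _ _ _ _
  have hnear := eventually_forall_mem_of_forall_isRoot_mem (fun i => hmonic (a i))
    (MvPolynomial.continuous_eval f) (t₀ := φ₀ h) isOpen_interior fun x hx hfx => by
      by_cases hxa : x = φ₀ ∘ a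
      · exact hxa ▸ mem_interior_iff_mem_nhds.2 hU
      · exact absurd ((happly hφ₀).symm.trans (hfx.symm.trans (hf x hx hxa))) hf₀
  rw [nhds_prod_eq, eventually_prod_iff] at hnear
  obtain ⟨nearBase, hbase, nearValue, hvalue, hnear⟩ := hnear
  filter_upwards [hbase, eventually_exists_isRoot_mem_of_isRoot (hmonic h) (hroot hφ₀ h) hvalue]
    with y hy ⟨t, ht, htroot⟩
  obtain ⟨φ, hφ, hφt⟩ := exists_ringHom_apply_eq_of_isRoot_minpoly htroot
  exact ⟨φ, hφ, interior_subset
    (hnear hy ht (φ ∘ a) (fun i => hroot hφ (a i)) ((happly hφ).symm.trans hφt))⟩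

theorem exists_algHom_comp_mem_and_apply_ne_zero {σ A : Type*} [Finite σ] [CommRing A]
    [IsDomain A] [Algebra K A] [Algebra.FiniteType K A] {φ₀ : A →ₐ[K] K} {a : σ → A}
    {U : Set (σ → K)} (hU : U ∈ 𝓝 (φ₀ ∘ a)) {s : A} (hs : s ≠ 0) :
    ∃ φ : A →ₐ[K] K, φ ∘ a ∈ U ∧ φ s ≠ 0 := by
  obtain ⟨d, g, hginj, hgint⟩ := exists_integral_inj_algHom_of_fg K A
  algebraize [g.toRingHom]
  have : FaithfulSMul (MvPolynomial (Fin d) K) A :=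
    (faithfulSMul_iff_algebraMap_injective _ _).2 hginj
  have : Algebra.IsIntegral (MvPolynomial (Fin d) K) A := ⟨hgint⟩
  obtain ⟨b, hb, r, hr⟩ := (Algebra.IsAlgebraic.isAlgebraic
    (R := MvPolynomial (Fin d) K) s).exists_nonzero_dvd (mem_nonZeroDivisors_of_ne_zero hs)
  have hφ₀ : (φ₀ : A →+* K).comp (algebraMap (MvPolynomial (Fin d) K) A) =
      eval fun j => φ₀ (g (X j)) :=
    MvPolynomial.ringHom_ext (fun c => by simp [RingHom.algebraMap_toAlgebra])
      fun j => by simp [RingHom.algebraMap_toAlgebra]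
  obtain ⟨y, hby, φ, hφ, hφU⟩ := ((frequently_eval_ne_zero hb _).and_eventually
    (eventually_exists_ringHom_comp_eq_eval hφ₀ hU)).exists
  have hφapply (p : MvPolynomial (Fin d) K) : φ (g p) = eval y p := RingHom.congr_fun hφ p
  refine ⟨{ φ with commutes' := fun c => ?_ }, hφU, fun hφs => hby ?_⟩
  · simpa using hφapply (C c)
  · calc eval y b = φ s * φ r := by rw [← hφapply, ← map_mul, ← hr]; rfl
      _ = 0 := mul_eq_zero_of_left hφs _

theorem zeroLocus_subset_closure_eval_ne_zero {σ : Type*} [Finite σ]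
    {I : Ideal (MvPolynomial σ K)} [I.IsPrime] {P : MvPolynomial σ K} (hP : P ∉ I) :
    zeroLocus K I ⊆ closure {z ∈ zeroLocus K I | eval z P ≠ 0} := by
  intro x₀ hx₀
  rw [mem_closure_iff_nhds]
  intro U hU
  let coord (i : σ) : MvPolynomial σ K ⧸ I := Ideal.Quotient.mk I (X i)
  have hφmk (φ : MvPolynomial σ K ⧸ I →ₐ[K] K) (p : MvPolynomial σ K) :
      φ (Ideal.Quotient.mk I p) = aeval (φ ∘ coord) p :=
    AlgHom.congr_fun (MvPolynomial.algHom_ext (f := φ.comp (Ideal.Quotient.mkₐ K I))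
      fun i => by simp [coord]) p
  have hcoord : Ideal.Quotient.liftₐ I (aeval x₀) hx₀ ∘ coord = x₀ := by
    ext i
    exact (Ideal.Quotient.liftₐ_apply I _ hx₀ _).trans (by simp [coord])
  obtain ⟨φ, hφU, hφP⟩ := exists_algHom_comp_mem_and_apply_ne_zero (hcoord.symm ▸ hU)
    (Ideal.Quotient.eq_zero_iff_mem.not.2 hP)
  refine ⟨φ ∘ coord, hφU, fun p hp => ?_, ?_⟩
  · rw [← hφmk, Ideal.Quotient.eq_zero_iff_mem.2 hp, map_zero]
  · rwa [hφmk, aeval_eq_eval] at hφP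

theorem mem_of_eventually_mem_zeroLocus_imp_eval_eq_zero {σ : Type*} [Finite σ]
    {I : Ideal (MvPolynomial σ K)} [I.IsPrime] {x₀ : σ → K} (hx₀ : x₀ ∈ zeroLocus K I)
    {P : MvPolynomial σ K} (hP : ∀ᶠ z in 𝓝 x₀, z ∈ zeroLocus K I → eval z P = 0) : P ∈ I := by
  by_contra hPI
  obtain ⟨z, ⟨hz, hPz⟩, hzero⟩ := ((mem_closure_iff_frequently.1
    (zeroLocus_subset_closure_eval_ne_zero hPI hx₀)).and_eventually hP).exists
  exact hPz (hzero hz)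

end ZeroLocus

section Irreducible

variable {σ K : Type*} [Field K]

theorem vanishingIdeal_isPrime {V : Set (σ → K)} (hne : V.Nonempty)
    (hirr : ∀ T₁ T₂ : Set (MvPolynomial σ K),
      V ⊆ {z | ∀ p ∈ T₁, eval z p = 0} ∪ {z | ∀ p ∈ T₂, eval z p = 0} →
        V ⊆ {z | ∀ p ∈ T₁, eval z p = 0} ∨ V ⊆ {z | ∀ p ∈ T₂, eval z p = 0}) :
    (vanishingIdeal K V).IsPrime := by
  obtain ⟨x, hx⟩ := hne
  refine ⟨fun htop => ?_, fun {p q} hpq => ?_⟩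
  · simpa using (Ideal.eq_top_iff_one _).1 htop x hx
  · have hcover : V ⊆ {z | ∀ r ∈ ({p} : Set (MvPolynomial σ K)), eval z r = 0} ∪
        {z | ∀ r ∈ ({q} : Set (MvPolynomial σ K)), eval z r = 0} := fun z hz => by
      simpa [aeval_eq_eval] using hpq z hz
    simpa [Set.subset_def, aeval_eq_eval] using hirr {p} {q} hcover

theorem zeroLocus_vanishingIdeal_of_eq {V : Set (σ → K)}
    {S : Set (MvPolynomial σ K)} (hV : V = {z | ∀ p ∈ S, eval z p = 0}) :
    zeroLocus K (vanishingIdeal K V) = V := by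
  have hVS : V = zeroLocus K (Ideal.span S) := by
    simp only [hV, zeroLocus_span, aeval_eq_eval]
  rw [hVS]
  exact zeroLocus_vanishingIdeal_galoisConnection.l_u_l_eq_l _

end Irreducible

theorem eqOn_zero_of_forall_ofReal {G : Type*} [NormedAddCommGroup G] [NormedSpace ℂ G]
    [CompleteSpace G] {f : ℂ → G} {U : Set ℂ} (hf : DifferentiableOn ℂ f U) (hU : IsOpen U)
    (hUc : IsPreconnected U) {x : ℝ} (hx : (x : ℂ) ∈ U) (hf₀ : ∀ t : ℝ, (t : ℂ) ∈ U → f t = 0) :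
    Set.EqOn f 0 U := by
  refine (hf.analyticOnNhd hU).eqOn_zero_of_preconnected_of_frequently_eq_zero hUc hx ?_
  have hcast : Tendsto ((↑) : ℝ → ℂ) (𝓝[≠] x) (𝓝[≠] (x : ℂ)) :=
    Complex.continuous_ofReal.continuousWithinAt.tendsto_nhdsWithin fun t ht => by simpa using ht
  have hmem : ∀ᶠ t : ℝ in 𝓝[≠] x, (t : ℂ) ∈ U :=
    hcast.eventually (mem_nhdsWithin_of_mem_nhds (hU.mem_nhds hx))
  exact hcast.frequently (hmem.mono hf₀).frequently

section RealStructure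

open scoped ComplexStarModule

variable {E G : Type*} [NormedAddCommGroup E] [NormedSpace ℂ E] [StarAddMonoid E]
  [NormedAddCommGroup G] [NormedSpace ℂ G] {x₀ : E}

theorem eventually_eq_zero_of_eventually_isSelfAdjoint_imp [StarModule ℂ E] [NormedStarGroup E]
    [CompleteSpace G] {g : E → G} (hx₀ : IsSelfAdjoint x₀)
    (hg : ∀ᶠ z in 𝓝 x₀, DifferentiableAt ℂ g z)
    (hg₀ : ∀ᶠ z in 𝓝 x₀, IsSelfAdjoint z → g z = 0) : ∀ᶠ z in 𝓝 x₀, g z = 0 := by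
  obtain ⟨ε, hε, hball⟩ := Metric.eventually_nhds_iff_ball.1 (hg.and hg₀)
  filter_upwards [ball_mem_nhds x₀ (show 0 < ε / 3 by positivity)] with z hz
  obtain ⟨a, rfl⟩ : ∃ a, z = x₀ + a := ⟨z - x₀, by abel⟩
  -- The complex line through `x₀ + a = line I` whose real points are self-adjoint.
  let line : ℂ → E := fun s => x₀ + ((ℜ a : E) + s • (ℑ a : E))
  have line_mem (s : ℂ) (hs : s ∈ ball 0 2) : line s ∈ ball x₀ ε := by
    rw [mem_ball_zero_iff] at hs
    rw [mem_ball_iff_norm, add_sub_cancel_left] at hz ⊢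
    calc ‖(ℜ a : E) + s • (ℑ a : E)‖ ≤ ‖(ℜ a : E)‖ + ‖s‖ * ‖(ℑ a : E)‖ :=
          (norm_add_le _ _).trans_eq (by rw [norm_smul])
      _ ≤ ‖a‖ + 2 * ‖a‖ := by
          gcongr
          exacts [realPart.norm_le a, imaginaryPart.norm_le a]
      _ < ε := by linarith
  have line_real (t : ℝ) : IsSelfAdjoint (line t) :=
    hx₀.add ((ℜ a).2.add (IsSelfAdjoint.smul (Complex.conj_ofReal t) (ℑ a).2))
  have line_diff : Differentiable ℂ line := by fun_prop
  have hzero : Set.EqOn (g ∘ line) 0 (ball 0 2) :=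
    eqOn_zero_of_forall_ofReal
      (fun s hs => ((hball _ (line_mem s hs)).1.comp s (line_diff s)).differentiableWithinAt)
      isOpen_ball (convex_ball _ _).isPreconnected (x := 0) (by simp)
      fun t ht => (hball _ (line_mem t ht)).2 (line_real t)
  have hI : line Complex.I = x₀ + a := by
    simp only [line, realPart_add_I_smul_imaginaryPart]
  simpa [hI] using hzero (show Complex.I ∈ ball 0 2 by simp)

variable [NormedStarGroup E] [StarAddMonoid G]

theorem exists_localInverse_isSelfAdjoint [CompleteSpace E] {f : E → G} {f' : E ≃L[ℂ] G}
    (hf : ContDiffAt ℂ 1 f x₀) (hf' : HasFDerivAt f (f' : E →L[ℂ] G) x₀) (hx₀ : IsSelfAdjoint x₀)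
    (hfstar : ∀ᶠ z in 𝓝 x₀, f (star z) = star (f z)) :
    ∃ g : G → E, ContDiffAt ℂ 1 g (f x₀) ∧ (∀ᶠ z in 𝓝 x₀, g (f z) = z) ∧
      ∀ᶠ w in 𝓝 (f x₀), f (g w) = w ∧ (IsSelfAdjoint w → IsSelfAdjoint (g w)) := by
  have hstrict := hf.hasStrictFDerivAt' hf' one_ne_zero
  refine ⟨_, hf.to_localInverse hf' one_ne_zero, hstrict.eventually_left_inverse, ?_⟩
  have hstar : Tendsto star (𝓝 x₀) (𝓝 x₀) := by
    simpa only [hx₀.star_eq] using continuous_star.tendsto x₀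
  filter_upwards [hstrict.eventually_right_inverse,
    hstrict.localInverse_tendsto.eventually (hstar.eventually hstrict.eventually_left_inverse),
    hstrict.localInverse_tendsto.eventually hfstar] with w hright hleft hcomm
  refine ⟨hright, fun hw => ?_⟩
  rw [hcomm, hright, hw.star_eq] at hleft
  exact hleft.symm

variable [StarModule ℂ E] [NormedStarGroup G] [StarModule ℂ G]

theorem map_star_of_hasFDerivAt {F : E → G} {J : E →L[ℂ] G} (hJ : HasFDerivAt F J x₀)
    (hx₀ : IsSelfAdjoint x₀) (hF : ∀ᶠ z in 𝓝 x₀, F (star z) = star (F z)) (v : E) :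
    J (star v) = star (J v) := by
  have hconj : HasFDerivAt F _ x₀ :=
    (hx₀.star_eq ▸ hJ.star_star).congr_of_eventuallyEq (hF.mono fun z hz => by simp [hz])
  simpa using congr($(hJ.unique hconj) (star v))

theorem exists_rightInverse_map_star {J : E →L[ℂ] G} (hJ : J.HasRightInverse)
    (hJstar : ∀ v, J (star v) = star (J v)) :
    ∃ K : G →L[ℂ] E, (∀ w, J (K w) = w) ∧ ∀ w, K (star w) = star (K w) := by
  obtain ⟨K, hK⟩ := hJ
  let Kconj : G →L[ℂ] E :=
    (starL ℂ).toContinuousLinearMap.comp (K.comp (starL ℂ).toContinuousLinearMap)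
  have hKconj (w : G) : Kconj w = star (K (star w)) := rfl
  refine ⟨(2⁻¹ : ℂ) • (K + Kconj), fun w => ?_, fun w => ?_⟩
  · have hJKconj : J (Kconj w) = w := by rw [hKconj, hJstar, hK, star_star]
    simp only [smul_apply, add_apply, map_smul, map_add, hK w, hJKconj, ← two_smul ℂ w, smul_smul]
    norm_num
  · simp [hKconj, add_comm]

theorem exists_retraction_zeroSet [CompleteSpace E] {F : E → G}
    (hF : ContDiffAt ℂ 1 F x₀) (hx₀ : IsSelfAdjoint x₀)
    (hFstar : ∀ᶠ z in 𝓝 x₀, F (star z) = star (F z))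
    (hF₀ : F x₀ = 0) (hF' : (fderiv ℂ F x₀).HasRightInverse) :
    ∃ ρ : E → E, ContDiffAt ℂ 1 ρ x₀ ∧ ∀ᶠ z in 𝓝 x₀,
      F (ρ z) = 0 ∧ (F z = 0 → ρ z = z) ∧ (IsSelfAdjoint z → IsSelfAdjoint (ρ z)) := by
  set J := fderiv ℂ F x₀
  have hJ : HasFDerivAt F J x₀ := (hF.differentiableAt one_ne_zero).hasFDerivAt
  have hJstar := map_star_of_hasFDerivAt hJ hx₀ hFstar
  obtain ⟨K, hJK, hKstar⟩ := exists_rightInverse_map_star hF' hJstar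
  -- In the coordinates given by `Φ`, whose derivative at `x₀` is the identity, the zero set of `F`
  -- is the affine subspace `x₀ + ker J`, onto which `q` projects.
  let q : E → E := fun z => z - K (J (z - x₀))
  let Φ : E → E := fun z => q z + K (F z)
  have hq : ContDiff ℂ 1 q := by fun_prop
  have hqx₀ : q x₀ = x₀ := by simp [q]
  have hΦx₀ : Φ x₀ = x₀ := by simp [Φ, hqx₀, hF₀]
  have hJq (z : E) : J (q z - x₀) = 0 := by simp [q, sub_right_comm, hJK]
  have hJΦ (z : E) : J (Φ z - x₀) = F z := by
    simp only [Φ, add_sub_right_comm, map_add, hJq, hJK, zero_add]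
  have hqstar (z : E) : q (star z) = star (q z) := by
    simp only [q, star_sub, ← hKstar, ← hJstar, hx₀.star_eq]
  have hΦstar : ∀ᶠ z in 𝓝 x₀, Φ (star z) = star (Φ z) := by
    filter_upwards [hFstar] with z hz
    simp only [Φ, hqstar, hz, hKstar, star_add]
  have hΦ : ContDiffAt ℂ 1 Φ x₀ := hq.contDiffAt.add (K.contDiff.contDiffAt.comp x₀ hF)
  have hΦ' : HasFDerivAt Φ (ContinuousLinearEquiv.refl ℂ E : E →L[ℂ] E) x₀ := by
    have hq' : HasFDerivAt q (.id ℂ E - K.comp J) x₀ :=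
      (hasFDerivAt_id x₀).sub ((K.comp J).hasFDerivAt.comp x₀ ((hasFDerivAt_id x₀).sub_const x₀))
    exact (hq'.add (K.hasFDerivAt.comp x₀ hJ)).congr_fderiv (sub_add_cancel _ _)
  obtain ⟨Ψ, hΨ, hΨΦ, hΦΨ⟩ := exists_localInverse_isSelfAdjoint hΦ hΦ' hx₀ hΦstar
  rw [hΦx₀, ← hqx₀] at hΨ hΦΨ
  refine ⟨Ψ ∘ q, hΨ.comp x₀ hq.contDiffAt, ?_⟩
  filter_upwards [hΨΦ, hq.continuous.continuousAt.eventually hΦΨ] with z hzΨ ⟨hzΦ, hzreal⟩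
  refine ⟨?_, fun hz => ?_, fun hz => hzreal ?_⟩
  · rw [← hJΦ, Function.comp_apply, hzΦ, hJq]
  · simpa [Φ, hz] using hzΨ
  · rw [IsSelfAdjoint, ← hqstar, hz.star_eq]

theorem eventually_eq_zero_of_eventually_isSelfAdjoint_imp_of_zeroSet [CompleteSpace E]
    {G' : Type*} [NormedAddCommGroup G'] [NormedSpace ℂ G'] [CompleteSpace G']
    {F : E → G} {g : E → G'}
    (hF : ContDiffAt ℂ 1 F x₀) (hx₀ : IsSelfAdjoint x₀)
    (hFstar : ∀ᶠ z in 𝓝 x₀, F (star z) = star (F z))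
    (hF₀ : F x₀ = 0) (hF' : (fderiv ℂ F x₀).HasRightInverse)
    (hg : ∀ᶠ z in 𝓝 x₀, DifferentiableAt ℂ g z)
    (hg₀ : ∀ᶠ z in 𝓝 x₀, F z = 0 → IsSelfAdjoint z → g z = 0) :
    ∀ᶠ z in 𝓝 x₀, F z = 0 → g z = 0 := by
  obtain ⟨ρ, hρ, hρF⟩ := exists_retraction_zeroSet hF hx₀ hFstar hF₀ hF'
  have hρx₀ : ρ x₀ = x₀ := hρF.self_of_nhds.2.1 hF₀
  have hρtendsto : Tendsto ρ (𝓝 x₀) (𝓝 x₀) := by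
    simpa only [hρx₀] using hρ.continuousAt.tendsto
  have hcomp : ∀ᶠ z in 𝓝 x₀, (g ∘ ρ) z = 0 := by
    refine eventually_eq_zero_of_eventually_isSelfAdjoint_imp hx₀ ?_ ?_
    · filter_upwards [hρ.eventually (by simp), hρtendsto.eventually hg] with z hzρ hzg
      exact hzg.comp z (hzρ.differentiableAt one_ne_zero)
    · filter_upwards [hρF, hρtendsto.eventually hg₀] with z ⟨hz₀, _, hzreal⟩ hzg hz
      exact hzg hz₀ (hzreal hz)
  filter_upwards [hρF, hcomp] with z ⟨_, hzρ, _⟩ hz hzF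
  rwa [Function.comp_apply, hzρ hzF] at hz

end RealStructure

theorem isSelfAdjoint_iff_forall_im_eq_zero {σ : Type*} {z : σ → ℂ} :
    IsSelfAdjoint z ↔ ∀ i, (z i).im = 0 := by
  simp only [isSelfAdjoint_iff, _root_.funext_iff, Pi.star_apply, RCLike.star_def,
    Complex.conj_eq_iff_im]

theorem aeval_star {σ R A : Type*} [CommSemiring R] [StarRing R] [TrivialStar R] [CommSemiring A]
    [StarRing A] [Algebra R A] [StarModule R A] (p : MvPolynomial σ R) (z : σ → A) :
    aeval (star z) p = star (aeval z p) := by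
  induction p using MvPolynomial.induction_on with
  | C r => simp [← algebraMap_star_comm]
  | add p q hp hq => simp [hp, hq]
  | mul_X p i hp => simp [hp, mul_comm]

theorem mulVec_surjective_of_rank_eq_card {m n K : Type*} [Fintype m] [Fintype n] [Field K]
    {M : Matrix m n K} (hM : M.rank = Fintype.card m) : Function.Surjective M.mulVec := by
  have hrange : M.mulVecLin.range = ⊤ :=
    Submodule.eq_top_of_finrank_eq (hM.trans (Module.finrank_pi K).symm)
  exact LinearMap.range_eq_top.1 hrange

section Polynomial

variable {σ ι R 𝕜 : Type*} [Fintype σ] [CommRing R] [NontriviallyNormedField 𝕜] [Algebra R 𝕜]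

theorem hasFDerivAt_aeval (p : MvPolynomial σ R) (x : σ → 𝕜) :
    HasFDerivAt (fun z : σ → 𝕜 => aeval z p)
      (∑ i, aeval x (pderiv i p) • (ContinuousLinearMap.proj i : (σ → 𝕜) →L[𝕜] 𝕜)) x := by
  classical
  induction p using MvPolynomial.induction_on with
  | C r =>
    simp only [aeval_C]
    exact (hasFDerivAt_const _ x).congr_fderiv (by ext v; simp)
  | add p q hp hq =>
    simp only [map_add]
    exact (hp.add hq).congr_fderiv (by ext v; simp [add_mul, Finset.sum_add_distrib])
  | mul_X p j hp =>
    simp only [map_mul, aeval_X]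
    refine (hp.mul (hasFDerivAt_apply j x)).congr_fderiv ?_
    ext v
    simp [pderiv_X, Pi.single_apply, apply_ite, ite_mul, Finset.sum_add_distrib, Finset.mul_sum,
      add_mul, mul_assoc]

theorem contDiff_aeval [CompleteSpace 𝕜] {n : WithTop ℕ∞} (p : MvPolynomial σ R) :
    ContDiff 𝕜 n fun z : σ → 𝕜 => aeval z p :=
  contDiff_iff_contDiffAt.2 fun x => (AnalyticAt.aeval_mvPolynomial
    (fun i => (ContinuousLinearMap.proj (R := 𝕜) (φ := fun _ : σ => 𝕜) i).analyticAt x)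
      p).contDiffAt

theorem fderiv_aeval_surjective_of_rank_eq_card [Fintype ι] {F : ι → MvPolynomial σ R}
    {x : σ → 𝕜}
    (hF : (Matrix.of fun j i => aeval x (pderiv i (F j))).rank = Fintype.card ι) :
    Function.Surjective (fderiv 𝕜 (fun z j => aeval z (F j)) x) := by
  have hderiv := hasFDerivAt_pi.2 fun j => hasFDerivAt_aeval (F j) x
  intro w
  obtain ⟨v, rfl⟩ := mulVec_surjective_of_rank_eq_card hF w
  refine ⟨v, ?_⟩
  rw [hderiv.fderiv]
  ext j
  simp [Matrix.mulVec, dotProduct]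

end Polynomial

theorem real_points_zariski_dense_in_complex_of_smooth_point_general {σ G : Type*} [Fintype σ]
    [NormedAddCommGroup G] [NormedSpace ℂ G] [StarAddMonoid G] [NormedStarGroup G]
    [StarModule ℂ G] {S : Set (MvPolynomial σ ℂ)} {V : Set (σ → ℂ)}
    (hV : V = {z | ∀ p ∈ S, eval z p = 0})
    (hirr : ∀ T₁ T₂ : Set (MvPolynomial σ ℂ),
      V ⊆ {z | ∀ p ∈ T₁, eval z p = 0} ∪ {z | ∀ p ∈ T₂, eval z p = 0} →
        V ⊆ {z | ∀ p ∈ T₁, eval z p = 0} ∨ V ⊆ {z | ∀ p ∈ T₂, eval z p = 0})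
    {x₀ : σ → ℂ} (hx₀V : x₀ ∈ V) (hx₀ : IsSelfAdjoint x₀) {F : (σ → ℂ) → G}
    (hF : ContDiffAt ℂ 1 F x₀) (hFstar : ∀ᶠ z in 𝓝 x₀, F (star z) = star (F z))
    (hF' : (fderiv ℂ F x₀).HasRightInverse) (hVF : ∀ᶠ z in 𝓝 x₀, z ∈ V ↔ F z = 0)
    {P : MvPolynomial σ ℂ} (hP : ∀ᶠ z in 𝓝 x₀, z ∈ V → IsSelfAdjoint z → eval z P = 0) :
    ∀ z ∈ V, eval z P = 0 := by
  have hprime : (vanishingIdeal ℂ V).IsPrime := vanishingIdeal_isPrime ⟨x₀, hx₀V⟩ hirr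
  have hlocus : zeroLocus ℂ (vanishingIdeal ℂ V) = V := zeroLocus_vanishingIdeal_of_eq hV
  have hPF : ∀ᶠ z in 𝓝 x₀, F z = 0 → eval z P = 0 := by
    refine eventually_eq_zero_of_eventually_isSelfAdjoint_imp_of_zeroSet hF hx₀ hFstar
      (hVF.self_of_nhds.1 hx₀V) hF' (.of_forall fun z => ?_) ?_
    · exact (AnalyticOnNhd.eval_mvPolynomial P z trivial).differentiableAt
    · filter_upwards [hVF, hP] with z hzV hzP hz using hzP (hzV.2 hz)
  have hPV : ∀ᶠ z in 𝓝 x₀, z ∈ V → eval z P = 0 := by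
    filter_upwards [hVF, hPF] with z hzV hzP hz using hzP (hzV.1 hz)
  have hPI : P ∈ vanishingIdeal ℂ V :=
    mem_of_eventually_mem_zeroLocus_imp_eval_eq_zero (hlocus.symm ▸ hx₀V) (hlocus.symm ▸ hPV)
  exact fun z hz => hPI z hz

/-- If an irreducible complex affine variety `V(ℂ) ⊆ ℂ^N`, cut out by real polynomials,
has a smooth real point `x₀`, then any Euclidean-open subset `H` of `V(ℝ) = V(ℂ) ∩ ℝ^N`
containing `x₀` is Zariski-dense in `V(ℂ)`: a complex polynomial vanishing on `H` vanishes
on all of `V(ℂ)`. -/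
theorem real_points_zariski_dense_in_complex_of_smooth_point
    (N nd : ℕ) (hN : 1 ≤ N) (hnd : nd ≤ N)
    (S : Set (MvPolynomial (Fin N) ℝ))
    (V : Set (Fin N → ℂ)) (hV : V = {z | ∀ p ∈ S, MvPolynomial.aeval z p = 0})
    (hne : V.Nonempty)
    (hirr : ∀ T₁ T₂ : Set (MvPolynomial (Fin N) ℂ),
      V ⊆ {z | ∀ p ∈ T₁, MvPolynomial.eval z p = 0} ∪
          {z | ∀ p ∈ T₂, MvPolynomial.eval z p = 0} →
      (V ⊆ {z | ∀ p ∈ T₁, MvPolynomial.eval z p = 0} ∨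
       V ⊆ {z | ∀ p ∈ T₂, MvPolynomial.eval z p = 0}))
    (x₀ : Fin N → ℂ) (hx₀V : x₀ ∈ V) (hx₀R : ∀ i, (x₀ i).im = 0)
    -- `x₀` is a smooth point of `V(ℂ)`:
    (W : Set (Fin N → ℂ)) (hWopen : IsOpen W) (hx₀W : x₀ ∈ W)
    (F : Fin (N - nd) → MvPolynomial (Fin N) ℝ)
    (hVF : V ∩ W = {z ∈ W | ∀ j, MvPolynomial.aeval z (F j) = 0})
    (hJac : (Matrix.of fun (j : Fin (N - nd)) (i : Fin N) =>
        MvPolynomial.aeval x₀ (MvPolynomial.pderiv i (F j))).rank = N - nd)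
    -- `H` is an open subset of `V(ℝ)` containing `x₀`:
    (H : Set (Fin N → ℂ))
    (hH : ∃ O : Set (Fin N → ℂ), IsOpen O ∧ H = {z ∈ V | ∀ i, (z i).im = 0} ∩ O)
    (hx₀H : x₀ ∈ H)
    (P : MvPolynomial (Fin N) ℂ) (hP : ∀ z ∈ H, MvPolynomial.eval z P = 0) :
    ∀ z ∈ V, MvPolynomial.eval z P = 0 := by
  obtain ⟨O, hO, rfl⟩ := hH
  have hVS : V = {z | ∀ p ∈ MvPolynomial.map (algebraMap ℝ ℂ) '' S, eval z p = 0} := by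
    simpa [eval_map, aeval_def] using hV
  refine real_points_zariski_dense_in_complex_of_smooth_point_general
    (F := fun z j => aeval z (F j)) hVS hirr hx₀V (isSelfAdjoint_iff_forall_im_eq_zero.2 hx₀R) ?_
    (.of_forall fun z => funext fun j => aeval_star (F j) z) ?_ ?_ ?_
  · exact contDiffAt_pi.2 fun j => (contDiff_aeval (F j)).contDiffAt
  · exact .of_surjective_of_finiteDimensional
      (fderiv_aeval_surjective_of_rank_eq_card (by simpa using hJac))
  · filter_upwards [hWopen.mem_nhds hx₀W] with z hz
    simpa [hz, _root_.funext_iff] using Set.ext_iff.1 hVF z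
  · filter_upwards [hO.mem_nhds hx₀H.2] with z hzO hzV hz
    exact hP z ⟨⟨hzV, isSelfAdjoint_iff_forall_im_eq_zero.1 hz⟩, hzO⟩
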